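/- For q = 2^s with s ≥ 1 and all β, γ ∈ F_q, the matrix identity U_β^{(3)} · X^γ · U_β^{(3)} = ε(tr(βγ^3)) · X^γ · Z^{(βγ)^{2^{s−1}} + βγ^2} holds in the q×q complex matrices (note that x ↦ x^{2^{s−1}} is the unique square-root map in F_q). -/

import Mathlib

noncomputable section

/-- The trace map `tr : F_{2^s} → F_2 ⊆ F_{2^s}`, `tr γ = Σ_{i=0}^{s-1} γ^{2^i}`
(its values lie in the prime field `{0, 1}`). -/
def trF {F : Type} [Field F] (s : ℕ) (x : F) : F := ∑ i ∈ Finset.range s, x ^ 2 ^ i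

/-- `ε ∘ tr : F_{2^s} → ℂ`, where `ε 0 = 1` and `ε 1 = -1` on the prime field `F_2`. -/
def epsTr {F : Type} [Field F] [DecidableEq F] (s : ℕ) (x : F) : ℂ := if trF s x = 0 then 1 else -1

/-- The Pauli `X^β`: `(X^β)_{η,η'} = 1` if `η = η' + β`, else `0`. -/
def Xm {F : Type} [Field F] [Fintype F] [DecidableEq F] (β : F) : Matrix F F ℂ :=
  Matrix.of fun η η' => if η = η' + β then 1 else 0

/-- The Pauli `Z^γ`: diagonal with entry `ε(tr(γη))` at `η`. -/
def Zm {F : Type} [Field F] [Fintype F] [DecidableEq F] (s : ℕ) (γ : F) : Matrix F F ℂ :=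
  Matrix.diagonal fun η => epsTr s (γ * η)

/-- The diagonal gate `U_β^{(n)}` with diagonal entry `ε(tr(β η^n))` at `η`. -/
def Um {F : Type} [Field F] [Fintype F] [DecidableEq F] (s : ℕ) (n : ℕ) (β : F) :
    Matrix F F ℂ :=
  Matrix.diagonal fun η => epsTr s (β * η ^ n)

lemma charTwo_aux {s : ℕ} (hs : 1 ≤ s) {F : Type} [Field F] [Fintype F]
    (hF : Fintype.card F = 2 ^ s) : CharP F 2 := by
  have h : (2 : F) = 0 := by
    have h1 : ((Fintype.card F : ℕ) : F) = 0 := Nat.cast_card_eq_zero F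
    rw [hF] at h1
    push_cast at h1
    exact pow_eq_zero_iff (by omega) |>.1 h1
  exact CharTwo.of_one_ne_zero_of_two_eq_zero one_ne_zero h

lemma trF_add {s : ℕ} {F : Type} [Field F] [CharP F 2] (x y : F) :
    trF s (x + y) = trF s x + trF s y := by
  unfold trF
  rw [← Finset.sum_add_distrib]
  exact Finset.sum_congr rfl fun i _ => add_pow_char_pow x y 2 i

lemma trF_sq {s : ℕ} {F : Type} [Field F] [Fintype F]
    (hF : Fintype.card F = 2 ^ s) (x : F) : trF s (x ^ 2) = trF s x := by
  unfold trF
  have h1 := Finset.sum_range_succ (fun i => x ^ 2 ^ i) s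
  have h2 := Finset.sum_range_succ' (fun i => x ^ 2 ^ i) s
  have h3 : x ^ 2 ^ s = x := by rw [← hF]; exact FiniteField.pow_card x
  simp only [h3, pow_zero, pow_one] at h1 h2
  rw [h1] at h2
  rw [add_right_cancel h2]
  refine Finset.sum_congr rfl fun i _ => ?_
  rw [← pow_mul, pow_succ']

lemma trF_zero_or_one {s : ℕ} {F : Type} [Field F] [Fintype F] [CharP F 2]
    (hF : Fintype.card F = 2 ^ s) (x : F) : trF s x = 0 ∨ trF s x = 1 := by
  have h : (trF s x) ^ 2 = trF s x := by
    conv_rhs => rw [← trF_sq hF]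
    unfold trF
    rw [sum_pow_char 2]
    refine Finset.sum_congr rfl fun i _ => ?_
    rw [← pow_mul, ← pow_mul, mul_comm]
  have h' : trF s x * (trF s x - 1) = 0 := by linear_combination h
  rcases mul_eq_zero.1 h' with h | h
  · exact Or.inl h
  · exact Or.inr (sub_eq_zero.1 h)

lemma epsTr_add {s : ℕ} {F : Type} [Field F] [Fintype F] [DecidableEq F] [CharP F 2]
    (hF : Fintype.card F = 2 ^ s) (x y : F) :
    epsTr s (x + y) = epsTr s x * epsTr s y := by
  unfold epsTr
  rw [trF_add]
  rcases trF_zero_or_one hF x with h | h <;> rcases trF_zero_or_one hF y with h' | h' <;>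
    simp [h, h', CharTwo.add_self_eq_zero]

/-- For `q = 2^s`, `s ≥ 1`: `U_β^{(3)} X^γ U_β^{(3)} = ε(tr(βγ^3)) X^γ Z^{(βγ)^{2^{s-1}} + βγ^2}`
(here `x ↦ x^{2^{s−1}}` is the unique square-root map in `F_q`). -/
theorem U3_conjugation_identity
    {s : ℕ} (hs : 1 ≤ s) {F : Type} [Field F] [Fintype F] [DecidableEq F]
    (hF : Fintype.card F = 2 ^ s) (β γ : F) :
    Um s 3 β * Xm γ * Um s 3 β =
      epsTr s (β * γ ^ 3) • (Xm γ * Zm s ((β * γ) ^ 2 ^ (s - 1) + β * γ ^ 2)) := by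
  have := charTwo_aux hs hF
  have h2 : (2 : F) = 0 := CharTwo.two_eq_zero
  ext η η'
  simp only [Um, Xm, Zm, Matrix.mul_diagonal, Matrix.diagonal_mul, Matrix.smul_apply,
    Matrix.of_apply, smul_eq_mul]
  by_cases h : η = η' + γ
  · subst h
    simp only [if_true, mul_one, one_mul]
    rw [← epsTr_add hF, ← epsTr_add hF]
    have hr : ((β * γ) ^ 2 ^ (s - 1)) ^ 2 = β * γ := by
      rw [← pow_mul, ← pow_succ, Nat.sub_add_cancel hs, ← hF]
      exact FiniteField.pow_card _
    generalize (β * γ) ^ 2 ^ (s - 1) = r at hr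
    have key : trF s (β * γ * η' ^ 2) = trF s (r * η') := by
      rw [← hr, ← mul_pow, trF_sq hF]
    have e : β * (η' + γ) ^ 3 + β * η' ^ 3
        = β * γ ^ 3 + (β * γ * η' ^ 2 + β * γ ^ 2 * η') := by
      linear_combination (β * η' ^ 3 + β * η' ^ 2 * γ + β * η' * γ ^ 2) * h2
    rw [e, add_mul]
    unfold epsTr
    simp only [trF_add, key]
  · simp [h]
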